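/- Let x_start ≠ x_goal in ℝ^n and c_best > ‖x_goal − x_start‖. Set m = (x_start + x_goal)/2, a = c_best/2, b = √(a² − ‖x_goal − x_start‖²/4), d̂ = (x_goal − x_start)/‖x_goal − x_start‖, and G = a d̂ d̂ᵀ + b (I − d̂ d̂ᵀ). Then the informed set { x ∈ ℝ^n : ‖x − x_start‖ + ‖x − x_goal‖ ≤ c_best } equals the ellipsotope { m + G ξ : ξ ∈ ℝ^n, ‖ξ‖₂ ≤ 1 }. -/

import Mathlib

open Matrix

theorem le_of_sq_le_sq_aux {x y : ℝ} (h : x ^ 2 ≤ y ^ 2) (hy : 0 ≤ y) : x ≤ y :=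
  (abs_le_of_sq_le_sq' h hy).2

theorem informed_key {E : Type*} [NormedAddCommGroup E] [InnerProductSpace ℝ E]
    (u y : E) (hu : ‖u‖ = 1) (a b c : ℝ) (hc : 0 < c) (hca : c < a) (hb : 0 < b)
    (hbb : b ^ 2 = a ^ 2 - c ^ 2) :
    ‖y + c • u‖ + ‖y - c • u‖ ≤ 2 * a ↔
      ∃ ξ : E, ‖ξ‖ ≤ 1 ∧
        y = a • (inner ℝ u ξ • u) + b • (ξ - inner ℝ u ξ • u) := by
  have ha : 0 < a := hc.trans hca
  have huu : inner ℝ u u = (1 : ℝ) := by rw [real_inner_self_eq_norm_sq, hu]; norm_num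
  have hP : ‖y + c • u‖ ^ 2 = ‖y‖ ^ 2 + 2 * c * inner ℝ u y + c ^ 2 := by
    rw [norm_add_sq_real, norm_smul, hu, inner_smul_right, real_inner_comm, mul_one,
      Real.norm_eq_abs, sq_abs]; ring
  have hQ : ‖y - c • u‖ ^ 2 = ‖y‖ ^ 2 - 2 * c * inner ℝ u y + c ^ 2 := by
    rw [norm_sub_sq_real, norm_smul, hu, inner_smul_right, real_inner_comm, mul_one,
      Real.norm_eq_abs, sq_abs]; ring
  have hcs : (inner ℝ u y) ^ 2 ≤ ‖y‖ ^ 2 := by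
    have h := abs_real_inner_le_norm u y
    rw [hu, one_mul] at h
    exact sq_le_sq' (by linarith [(abs_le.mp h).1]) (abs_le.mp h).2
  have comb : ∀ (p q : ℝ) (z : E), ‖p • u + q • (z - inner ℝ u z • u)‖ ^ 2
      = p ^ 2 + q ^ 2 * (‖z‖ ^ 2 - (inner ℝ u z) ^ 2) := by
    intro p q z
    rw [← real_inner_self_eq_norm_sq, ← real_inner_self_eq_norm_sq]
    simp only [inner_add_left, inner_add_right, inner_sub_left, inner_sub_right,
      real_inner_smul_left, real_inner_smul_right, huu, real_inner_comm u z]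
    ring
  have combi : ∀ (p q : ℝ) (z : E), inner ℝ u (p • u + q • (z - inner ℝ u z • u)) = p := by
    intro p q z
    simp only [inner_add_right, inner_sub_right, real_inner_smul_right, huu]
    ring
  have hmid : ‖y + c • u‖ + ‖y - c • u‖ ≤ 2 * a ↔
      a ^ 2 * ‖y‖ ^ 2 - c ^ 2 * (inner ℝ u y) ^ 2 ≤ a ^ 2 * b ^ 2 := by
    have hP0 := norm_nonneg (y + c • u)
    have hQ0 := norm_nonneg (y - c • u)
    generalize ‖y + c • u‖ = P at *
    generalize ‖y - c • u‖ = Q at *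
    generalize (inner ℝ u y : ℝ) = t at *
    generalize ‖y‖ ^ 2 = r at *
    constructor
    · intro h
      have h1 : P ^ 2 ≤ (2 * a - Q) ^ 2 := pow_le_pow_left₀ hP0 (by linarith) 2
      have h2 : a * Q ≤ a ^ 2 - c * t := by nlinarith
      have h3 : (a * Q) ^ 2 ≤ (a ^ 2 - c * t) ^ 2 := pow_le_pow_left₀ (by positivity) h2 2
      rw [mul_pow, hQ] at h3
      rw [hbb]; linarith
    · intro h
      have h1 : b ^ 2 * t ^ 2 ≤ b ^ 2 * a ^ 2 := by
        have := mul_le_mul_of_nonneg_left hcs (sq_nonneg a)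
        have e : b ^ 2 * t ^ 2 = a ^ 2 * t ^ 2 - c ^ 2 * t ^ 2 := by rw [hbb]; ring
        linarith
      have h2 : t ^ 2 ≤ a ^ 2 := le_of_mul_le_mul_left h1 (by positivity)
      obtain ⟨h3, h4⟩ := abs_le_of_sq_le_sq' h2 ha.le
      have h5 : 0 ≤ a ^ 2 - c * t := by nlinarith
      have h6 : 0 ≤ a ^ 2 + c * t := by nlinarith
      rw [hbb] at h
      have h7 : a * Q ≤ a ^ 2 - c * t := by
        apply le_of_sq_le_sq_aux _ h5
        rw [mul_pow, hQ]; linarith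
      have h8 : a * P ≤ a ^ 2 + c * t := by
        apply le_of_sq_le_sq_aux _ h6
        rw [mul_pow, hP]; linarith
      apply le_of_mul_le_mul_left _ ha
      linarith
  rw [hmid]
  constructor
  · intro h
    have hi := combi (inner ℝ u y / a) b⁻¹ y
    have hn := comb (inner ℝ u y / a) b⁻¹ y
    refine ⟨(inner ℝ u y / a) • u + b⁻¹ • (y - inner ℝ u y • u), ?_, ?_⟩
    · apply le_of_sq_le_sq_aux _ zero_le_one
      rw [hn]
      have : (inner ℝ u y / a) ^ 2 + b⁻¹ ^ 2 * (‖y‖ ^ 2 - inner ℝ u y ^ 2)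
        = (a ^ 2 * ‖y‖ ^ 2 - (a ^ 2 - b ^ 2) * inner ℝ u y ^ 2) / (a ^ 2 * b ^ 2) := by
        field_simp; ring
      rw [this, one_pow, div_le_one (by positivity), hbb]
      rw [hbb] at h
      linarith
    · rw [hi, add_sub_cancel_left, smul_smul, smul_smul, mul_div_cancel₀ _ ha.ne',
        mul_inv_cancel₀ hb.ne', one_smul]
      abel
  · rintro ⟨ξ, h1, h2⟩
    rw [smul_smul] at h2
    have hi := combi (a * inner ℝ u ξ) b ξ
    have hn := comb (a * inner ℝ u ξ) b ξ
    rw [← h2] at hi hn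
    rw [hi, hn]
    have h3 : ‖ξ‖ ^ 2 ≤ 1 := pow_le_one₀ (norm_nonneg _) h1
    have h4 := mul_le_mul_of_nonneg_left h3 (by positivity : 0 ≤ a ^ 2 * b ^ 2)
    have e : c ^ 2 = a ^ 2 - b ^ 2 := by linarith
    rw [e]
    linarith

/-- The informed set `{ x : ‖x − x_start‖ + ‖x − x_goal‖ ≤ c_best }` equals the
ellipsotope `E₂(m, G) = { m + G ξ : ‖ξ‖₂ ≤ 1 }` with center
`m = (x_start + x_goal)/2` and generator matrix
`G = a d̂ d̂ᵀ + b (I − d̂ d̂ᵀ)`. -/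
theorem informedSet_eq_ellipsotope {n : ℕ}
    (xstart xgoal : EuclideanSpace ℝ (Fin n)) (hne : xstart ≠ xgoal)
    (cbest : ℝ) (hc : ‖xgoal - xstart‖ < cbest)
    (m : EuclideanSpace ℝ (Fin n)) (hm : m = (1 / 2 : ℝ) • (xstart + xgoal))
    (a : ℝ) (ha : a = cbest / 2)
    (b : ℝ) (hb : b = Real.sqrt (a ^ 2 - ‖xgoal - xstart‖ ^ 2 / 4))
    (dhat : Fin n → ℝ) (hd : dhat = ‖xgoal - xstart‖⁻¹ • (xgoal - xstart))
    (G : Matrix (Fin n) (Fin n) ℝ)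
    (hG : G = a • Matrix.vecMulVec dhat dhat + b • (1 - Matrix.vecMulVec dhat dhat)) :
    {x : EuclideanSpace ℝ (Fin n) | ‖x - xstart‖ + ‖x - xgoal‖ ≤ cbest} =
      {x : EuclideanSpace ℝ (Fin n) | ∃ ξ : EuclideanSpace ℝ (Fin n),
        ‖ξ‖ ≤ 1 ∧ x = m + (show EuclideanSpace ℝ (Fin n) from WithLp.toLp 2 (G *ᵥ ξ))} := by
  have hD : 0 < ‖xgoal - xstart‖ := norm_pos_iff.mpr (sub_ne_zero.mpr hne.symm)
  set D := ‖xgoal - xstart‖ with hDdef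
  set u : EuclideanSpace ℝ (Fin n) := D⁻¹ • (xgoal - xstart) with hudef
  have hu : ‖u‖ = 1 := by
    rw [hudef, norm_smul, norm_inv, Real.norm_of_nonneg hD.le, ← hDdef, inv_mul_cancel₀ hD.ne']
  have hdu : dhat = u.ofLp := by rw [hd, hudef]; rfl
  have hpos : 0 < a ^ 2 - D ^ 2 / 4 := by rw [ha]; nlinarith
  have hb0 : 0 < b := by rw [hb]; exact Real.sqrt_pos.mpr hpos
  have hbb : b ^ 2 = a ^ 2 - (D / 2) ^ 2 := by rw [hb, Real.sq_sqrt hpos.le]; ring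
  have hDu : (D / 2) • u = (1 / 2 : ℝ) • (xgoal - xstart) := by
    rw [hudef, smul_smul]; congr 1; field_simp
  ext x
  have key := informed_key u (x - m) hu a b (D / 2) (by linarith) (by linarith) hb0 hbb
  have e1 : x - m + (D / 2) • u = x - xstart := by rw [hDu, hm]; module
  have e2 : x - m - (D / 2) • u = x - xgoal := by rw [hDu, hm]; module
  rw [e1, e2, show 2 * a = cbest by linarith] at key
  simp only [Set.mem_setOf_eq]
  rw [key]
  refine exists_congr fun ξ => and_congr_right fun _ => ?_
  have hGξ : (WithLp.toLp 2 (G *ᵥ ξ.ofLp) : EuclideanSpace ℝ (Fin n)) =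
      a • (inner ℝ u ξ • u) + b • (ξ - inner ℝ u ξ • u) := by
    have hin : (inner ℝ u ξ : ℝ) = dhat ⬝ᵥ ξ.ofLp := by
      rw [hdu, EuclideanSpace.inner_eq_star_dotProduct, dotProduct_comm]; simp
    ext i
    rw [hG, hin]
    simp [Matrix.add_mulVec, Matrix.smul_mulVec, Matrix.sub_mulVec, Matrix.vecMulVec_mulVec, hdu]
  change _ ↔ x = m + WithLp.toLp 2 (G *ᵥ ξ.ofLp)
  rw [hGξ, sub_eq_iff_eq_add']
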